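/- Let (p_n) be a sequence of integers with p_n ≥ 2 for all n and p_n → ∞, and let (κ_n) be a sequence in (0,∞) with κ_n/p_n → ξ for some ξ > 0. Set c_ξ := 1/2 + √(1/4 + ξ²). Then e₁(p_n,κ_n) → ξ/c_ξ, the sequence p_n ẽ₂(p_n,κ_n) is bounded, and f₂(p_n,κ_n) → 1/c_ξ as n → ∞. -/

import Mathlib

open MeasureTheory intervalIntegral Filter

/-- `mInt p κ ℓ = ∫_{-1}^1 u^ℓ (1-u²)^{(p-3)/2} exp(κ u) du`. -/
noncomputable def mInt (p : ℕ) (κ : ℝ) (ℓ : ℕ) : ℝ :=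
  ∫ u in (-1 : ℝ)..1, u ^ ℓ * (1 - u ^ 2) ^ (((p : ℝ) - 3) / 2) * Real.exp (κ * u)

/-- `e₁(p,κ) = E[U]` under `FvML_p(θ,κ)`. -/
noncomputable def e1 (p : ℕ) (κ : ℝ) : ℝ := mInt p κ 1 / mInt p κ 0

/-- `e₂(p,κ) = E[U²]` under `FvML_p(θ,κ)`. -/
noncomputable def e2 (p : ℕ) (κ : ℝ) : ℝ := mInt p κ 2 / mInt p κ 0

/-- `ẽ₂(p,κ) = Var[U]` under `FvML_p(θ,κ)`. -/
noncomputable def etilde2 (p : ℕ) (κ : ℝ) : ℝ := e2 p κ - (e1 p κ) ^ 2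

/-- `f₂(p,κ) = E[1-U²]` under `FvML_p(θ,κ)`. -/
noncomputable def f2 (p : ℕ) (κ : ℝ) : ℝ := 1 - e2 p κ

/-!
Write `r = t / c_t` for `t = κ / (p - 1)`. Then `κ (1 - u²) - (p - 1) u` vanishes at `u = r`, and
Stein's identity for `U ∼ FvML_p` applied to the test function `u - r` becomes
`E[1 - U²] = (p - 1) E[(U - r)² (1 + t (U + r))]`. The last factor is at least `1 / 2` on `[-1, 1]`,
so `(p - 1) E[(U - r)²] ≤ 2`. This bounds both the variance and the squared distance of the mean
from `r`, and `r → ξ / c_ξ` because `c` is continuous. The limit of `E[1 - U²]` is then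
`1 - (ξ / c_ξ)² = 1 / c_ξ`.
-/

open ProbabilityTheory
open scoped Topology

lemma intervalIntegrable_one_sub_sq_rpow {s : ℝ} (hs : -1 < s) :
    IntervalIntegrable (fun u : ℝ => (1 - u ^ 2) ^ s) volume (-1) 1 := by
  have right_half : IntervalIntegrable (fun u : ℝ => (1 - u ^ 2) ^ s) volume 0 1 := by
    have singular : IntervalIntegrable (fun u : ℝ => (1 - u) ^ s) volume 0 1 := by
      simpa using ((intervalIntegrable_rpow' hs).comp_sub_left (a := 0) (b := 1) 1).symm
    have regular : ContinuousOn (fun u : ℝ => (1 + u) ^ s) (Set.uIcc 0 1) := by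
      refine ContinuousOn.rpow_const (by fun_prop) fun u hu => Or.inl ?_
      rw [Set.uIcc_of_le zero_le_one] at hu
      linarith [hu.1]
    refine (singular.mul_continuousOn regular).congr fun u hu => ?_
    rw [Set.uIoc_of_le zero_le_one] at hu
    rw [← Real.mul_rpow (by linarith [hu.2]) (by linarith [hu.1])]
    ring_nf
  have left_half : IntervalIntegrable (fun u : ℝ => (1 - u ^ 2) ^ s) volume (-1) 0 := by
    simpa using (right_half.comp_sub_left 0).symm
  exact left_half.trans right_half

lemma hasDerivAt_one_sub_sq_rpow_mul_exp (s κ : ℝ) {u : ℝ} (hu : u ∈ Set.Ioo (-1) 1) :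
    HasDerivAt (fun u : ℝ => (1 - u ^ 2) ^ (s + 1) * Real.exp (κ * u))
      ((κ * (1 - u ^ 2) - 2 * (s + 1) * u) * ((1 - u ^ 2) ^ s * Real.exp (κ * u))) u := by
  have hpos : 0 < 1 - u ^ 2 := by nlinarith [hu.1, hu.2]
  have base : HasDerivAt (fun u : ℝ => 1 - u ^ 2) (-(2 * u)) u := by
    simpa using (hasDerivAt_pow 2 u).const_sub 1
  have power := base.rpow_const (p := s + 1) (Or.inl hpos.ne')
  have exponential : HasDerivAt (fun u : ℝ => Real.exp (κ * u)) (Real.exp (κ * u) * κ) u := by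
    simpa using ((hasDerivAt_id u).const_mul κ).exp
  refine (power.mul exponential).congr_deriv ?_
  rw [Real.rpow_add_one hpos.ne', add_sub_cancel_right]
  ring

/-- The law of one coordinate of a uniform point on the unit sphere of `ℝᵖ`, up to its normalising
constant. It is the measure whose exponential tilts are the laws `fvmlLaw`. -/
noncomputable def sphereMarginal (p : ℕ) : Measure ℝ :=
  (volume.restrict (Set.Ioc (-1) 1)).withDensity fun u =>
    ENNReal.ofReal ((1 - u ^ 2) ^ (((p : ℝ) - 3) / 2))

/-- The law of `U = ⟨X, θ⟩` when `X` follows the distribution `FvML_p(θ,κ)`. For `p < 2` the total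
mass of `sphereMarginal p` is infinite and this is the zero measure. -/
noncomputable def fvmlLaw (p : ℕ) (κ : ℝ) : Measure ℝ :=
  (sphereMarginal p).tilted fun u => κ * u

instance (p : ℕ) (κ : ℝ) : IsZeroOrProbabilityMeasure (fvmlLaw p κ) :=
  isZeroOrProbabilityMeasure_tilted

lemma integral_sphereMarginal (p : ℕ) (g : ℝ → ℝ) :
    ∫ u, g u ∂sphereMarginal p =
      ∫ u in (-1 : ℝ)..1, (1 - u ^ 2) ^ (((p : ℝ) - 3) / 2) * g u := by
  rw [sphereMarginal, integral_withDensity_eq_integral_toReal_smul (by fun_prop) (by simp),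
    intervalIntegral.integral_of_le (by norm_num)]
  refine setIntegral_congr_fun measurableSet_Ioc fun u hu => ?_
  have hnonneg : 0 ≤ 1 - u ^ 2 := by nlinarith [hu.1, hu.2]
  simp only [ENNReal.toReal_ofReal (Real.rpow_nonneg hnonneg _), smul_eq_mul]

lemma integral_fvmlLaw (p : ℕ) (κ : ℝ) (g : ℝ → ℝ) :
    ∫ u, g u ∂fvmlLaw p κ =
      (∫ u in (-1 : ℝ)..1, g u * ((1 - u ^ 2) ^ (((p : ℝ) - 3) / 2) * Real.exp (κ * u))) /
        mInt p κ 0 := by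
  have mass : ∫ u, Real.exp (κ * u) ∂sphereMarginal p = mInt p κ 0 := by
    simp only [integral_sphereMarginal, mInt, pow_zero, one_mul]
  rw [fvmlLaw, integral_tilted, mass, integral_sphereMarginal, ← intervalIntegral.integral_div]
  refine integral_congr fun u _ => ?_
  simp only [smul_eq_mul]
  ring

lemma ae_fvmlLaw_mem_Icc (p : ℕ) (κ : ℝ) : ∀ᵐ u ∂fvmlLaw p κ, u ∈ Set.Icc (-1) 1 := by
  have hac : fvmlLaw p κ ≪ volume.restrict (Set.Ioc (-1) 1) :=
    (tilted_absolutelyContinuous _ _).trans (withDensity_absolutelyContinuous _ _)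
  exact hac.ae_le ((ae_restrict_mem measurableSet_Ioc).mono fun _ => Set.mem_Icc_of_Ioc)

lemma memLp_fvmlLaw (p : ℕ) (κ : ℝ) {g : ℝ → ℝ} (hg : Continuous g) (q : ENNReal) :
    MemLp g q (fvmlLaw p κ) := by
  obtain ⟨C, hC⟩ :=
    isCompact_Icc.exists_bound_of_continuousOn (hg.continuousOn (s := Set.Icc (-1) 1))
  exact .of_bound hg.aestronglyMeasurable C ((ae_fvmlLaw_mem_Icc p κ).mono hC)

lemma integrable_fvmlLaw (p : ℕ) (κ : ℝ) {g : ℝ → ℝ} (hg : Continuous g) :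
    Integrable g (fvmlLaw p κ) :=
  memLp_one_iff_integrable.1 (memLp_fvmlLaw p κ hg 1)

section Law

variable {p : ℕ} (hp : 2 ≤ p) (κ : ℝ)

include hp

lemma neg_one_lt_sub_three_div_two : -1 < ((p : ℝ) - 3) / 2 := by
  have : (2 : ℝ) ≤ p := by exact_mod_cast hp
  linarith

lemma intervalIntegrable_mul_fvml_weight {g : ℝ → ℝ} (hg : Continuous g) :
    IntervalIntegrable
      (fun u : ℝ => g u * ((1 - u ^ 2) ^ (((p : ℝ) - 3) / 2) * Real.exp (κ * u))) volume (-1) 1 :=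
  ((intervalIntegrable_one_sub_sq_rpow (neg_one_lt_sub_three_div_two hp)).mul_continuousOn
    (by fun_prop)).continuousOn_mul hg.continuousOn

lemma mInt_zero_pos : 0 < mInt p κ 0 := by
  refine intervalIntegral_pos_of_pos_on ?_ (fun u hu => ?_) (by norm_num)
  · simpa using intervalIntegrable_mul_fvml_weight hp κ (g := fun _ => 1) continuous_const
  · have : 0 < 1 - u ^ 2 := by nlinarith [hu.1, hu.2]
    positivity

lemma isProbabilityMeasure_fvmlLaw : IsProbabilityMeasure (fvmlLaw p κ) := by
  refine (eq_zero_or_isProbabilityMeasure (fvmlLaw p κ)).resolve_left fun hzero => ?_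
  have total : ∫ _, (1 : ℝ) ∂fvmlLaw p κ = 1 := by
    rw [integral_fvmlLaw]
    simpa [mInt] using div_self (mInt_zero_pos hp κ).ne'
  simp [hzero] at total

theorem fvmlLaw_stein_identity {f f' : ℝ → ℝ} (hf : ∀ u, HasDerivAt f (f' u) u)
    (hf' : Continuous f') :
    ∫ u, (f' u * (1 - u ^ 2) + f u * (κ * (1 - u ^ 2) - (p - 1) * u)) ∂fvmlLaw p κ = 0 := by
  set s : ℝ := ((p : ℝ) - 3) / 2 with s_def
  have hs : 0 < s + 1 := by linarith [neg_one_lt_sub_three_div_two hp]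
  have f_cont : Continuous f := continuous_iff_continuousAt.2 fun u => (hf u).continuousAt
  have weight_cont : Continuous fun u : ℝ => (1 - u ^ 2) ^ (s + 1) * Real.exp (κ * u) :=
    ((by fun_prop : Continuous fun u : ℝ => 1 - u ^ 2).rpow_const fun _ => Or.inr hs.le).mul
      (by fun_prop)
  have hderiv : ∀ u ∈ Set.Ioo (-1 : ℝ) 1,
      HasDerivAt (fun u => f u * ((1 - u ^ 2) ^ (s + 1) * Real.exp (κ * u)))
        ((f' u * (1 - u ^ 2) + f u * (κ * (1 - u ^ 2) - (p - 1) * u)) *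
          ((1 - u ^ 2) ^ s * Real.exp (κ * u))) u := fun u hu => by
    refine ((hf u).mul (hasDerivAt_one_sub_sq_rpow_mul_exp s κ hu)).congr_deriv ?_
    rw [Real.rpow_add_one (by nlinarith [hu.1, hu.2]), s_def]
    ring
  rw [integral_fvmlLaw, integral_eq_sub_of_hasDerivAt_of_le (by norm_num)
    (f_cont.mul weight_cont).continuousOn hderiv
    (intervalIntegrable_mul_fvml_weight hp κ (by fun_prop))]
  simp [Real.zero_rpow hs.ne']

end Law

lemma e1_eq_integral (p : ℕ) (κ : ℝ) : e1 p κ = ∫ u, u ∂fvmlLaw p κ := by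
  simp only [integral_fvmlLaw, e1, mInt, pow_one, mul_assoc]

lemma e2_eq_integral (p : ℕ) (κ : ℝ) : e2 p κ = ∫ u, u ^ 2 ∂fvmlLaw p κ := by
  simp only [integral_fvmlLaw, e2, mInt, mul_assoc]

lemma etilde2_eq_variance {p : ℕ} (hp : 2 ≤ p) (κ : ℝ) : etilde2 p κ = Var[id; fvmlLaw p κ] := by
  have := isProbabilityMeasure_fvmlLaw hp κ
  rw [variance_eq_sub (memLp_fvmlLaw p κ continuous_id 2), etilde2, e1_eq_integral, e2_eq_integral]
  rfl

lemma etilde2_nonneg {p : ℕ} (hp : 2 ≤ p) (κ : ℝ) : 0 ≤ etilde2 p κ :=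
  etilde2_eq_variance hp κ ▸ variance_nonneg _ _

lemma integral_sq_sub_fvmlLaw {p : ℕ} (hp : 2 ≤ p) (κ r : ℝ) :
    ∫ u, (u - r) ^ 2 ∂fvmlLaw p κ = etilde2 p κ + (e1 p κ - r) ^ 2 := by
  have := isProbabilityMeasure_fvmlLaw hp κ
  have hmean : ∫ u, (u - r) ∂fvmlLaw p κ = e1 p κ - r := by
    rw [integral_sub (integrable_fvmlLaw p κ (by fun_prop)) (integrable_const r), e1_eq_integral]
    simp
  have hvar := variance_eq_sub (memLp_fvmlLaw p κ (g := fun u => u - r) (by fun_prop) 2)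
  rw [hmean] at hvar
  rw [etilde2_eq_variance hp, ← variance_sub_const aestronglyMeasurable_id r]
  simp only [id, Pi.pow_apply] at hvar ⊢
  linarith

/-- The constant `c_ξ` of the paper, that is, the positive solution of `c² = c + ξ²`. -/
noncomputable def cXi (ξ : ℝ) : ℝ := 1 / 2 + Real.sqrt (1 / 4 + ξ ^ 2)

lemma cXi_pos (ξ : ℝ) : 0 < cXi ξ := by
  unfold cXi
  positivity

lemma cXi_sq (ξ : ℝ) : cXi ξ ^ 2 = cXi ξ + ξ ^ 2 := by
  have := Real.sq_sqrt (show 0 ≤ 1 / 4 + ξ ^ 2 by positivity)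
  unfold cXi
  linear_combination this

lemma continuous_cXi : Continuous cXi := by
  unfold cXi
  fun_prop

lemma abs_add_half_le_cXi (ξ : ℝ) : |ξ| + 1 / 2 ≤ cXi ξ := by
  have : |ξ| ≤ Real.sqrt (1 / 4 + ξ ^ 2) := Real.abs_le_sqrt (by linarith)
  unfold cXi
  linarith

lemma one_sub_sq_div_cXi (ξ : ℝ) : 1 - (ξ / cXi ξ) ^ 2 = 1 / cXi ξ := by
  have := (cXi_pos ξ).ne'
  field_simp
  linear_combination cXi_sq ξ

lemma half_le_one_add_mul_add_div_cXi (t : ℝ) {u : ℝ} (hu : u ∈ Set.Icc (-1) 1) :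
    1 / 2 ≤ 1 + t * (u + t / cXi t) := by
  have htr : t * (t / cXi t) = cXi t - 1 := by
    have := (cXi_pos t).ne'
    field_simp
    linear_combination -cXi_sq t
  have htu : -|t| ≤ t * u := by
    refine (abs_le.1 ?_).1
    rw [abs_mul]
    exact mul_le_of_le_one_right (abs_nonneg t) (abs_le.2 hu)
  linarith [abs_add_half_le_cXi t]

section Concentration

variable {p : ℕ} (hp : 2 ≤ p)

include hp

lemma integral_one_sub_sq_fvmlLaw (t : ℝ) :
    ∫ u, (1 - u ^ 2) ∂fvmlLaw p ((p - 1) * t) =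
      ∫ u, (p - 1) * ((u - t / cXi t) ^ 2 * (1 + t * (u + t / cXi t)))
        ∂fvmlLaw p ((p - 1) * t) := by
  have root : t * (1 - (t / cXi t) ^ 2) = t / cXi t := by rw [one_sub_sq_div_cXi, mul_one_div]
  have stein := fvmlLaw_stein_identity hp ((p - 1) * t) (f := fun u => u - t / cXi t)
    (fun u => (hasDerivAt_id u).sub_const _) continuous_const
  rw [← sub_eq_zero, ← integral_sub (integrable_fvmlLaw _ _ (by fun_prop))
    (integrable_fvmlLaw _ _ (by fun_prop)), ← stein]
  congr 1 with u
  linear_combination -(p - 1) * (u - t / cXi t) * root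

lemma integral_sq_sub_fvmlLaw_le (t : ℝ) :
    (p - 1) * ∫ u, (u - t / cXi t) ^ 2 ∂fvmlLaw p ((p - 1) * t) ≤ 2 := by
  have hp1 : (0 : ℝ) ≤ p - 1 := by
    have : (2 : ℝ) ≤ p := by exact_mod_cast hp
    linarith
  have := isProbabilityMeasure_fvmlLaw hp ((p - 1) * t)
  have lower : ∫ u, (p - 1) / 2 * (u - t / cXi t) ^ 2 ∂fvmlLaw p ((p - 1) * t) ≤
      ∫ u, (1 - u ^ 2) ∂fvmlLaw p ((p - 1) * t) := by
    rw [integral_one_sub_sq_fvmlLaw hp]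
    refine integral_mono_ae (integrable_fvmlLaw _ _ (by fun_prop))
      (integrable_fvmlLaw _ _ (by fun_prop)) ?_
    filter_upwards [ae_fvmlLaw_mem_Icc p ((p - 1) * t)] with u hu
    have := mul_le_mul_of_nonneg_left (half_le_one_add_mul_add_div_cXi t hu)
      (mul_nonneg hp1 (sq_nonneg (u - t / cXi t)))
    linarith
  have upper : ∫ u, (1 - u ^ 2) ∂fvmlLaw p ((p - 1) * t) ≤ 1 := by
    calc ∫ u, (1 - u ^ 2) ∂fvmlLaw p ((p - 1) * t)
        ≤ ∫ _, (1 : ℝ) ∂fvmlLaw p ((p - 1) * t) :=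
          integral_mono (integrable_fvmlLaw _ _ (by fun_prop)) (integrable_const 1)
            fun u => by simpa using sq_nonneg u
      _ = 1 := by simp
  rw [MeasureTheory.integral_const_mul] at lower
  linarith

lemma natCast_mul_etilde2_add_sq_e1_sub_le (κ : ℝ) :
    p * (etilde2 p κ + (e1 p κ - κ / (p - 1) / cXi (κ / (p - 1))) ^ 2) ≤ 4 := by
  have hp2 : (2 : ℝ) ≤ p := by exact_mod_cast hp
  have hp1 : (p : ℝ) - 1 ≠ 0 := by linarith
  have bound := integral_sq_sub_fvmlLaw_le hp (κ / (p - 1))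
  rw [mul_div_cancel₀ κ hp1] at bound
  rw [← integral_sq_sub_fvmlLaw hp]
  have : 0 ≤ ∫ u, (u - κ / (p - 1) / cXi (κ / (p - 1))) ^ 2 ∂fvmlLaw p κ :=
    integral_nonneg fun u => sq_nonneg _
  nlinarith

lemma abs_natCast_mul_etilde2_le (κ : ℝ) : |p * etilde2 p κ| ≤ 4 := by
  rw [abs_of_nonneg (mul_nonneg p.cast_nonneg (etilde2_nonneg hp κ))]
  refine le_trans ?_ (natCast_mul_etilde2_add_sq_e1_sub_le hp κ)
  gcongr
  exact le_add_of_nonneg_right (sq_nonneg _)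

lemma sq_e1_sub_le_four_div (κ : ℝ) : (e1 p κ - κ / (p - 1) / cXi (κ / (p - 1))) ^ 2 ≤ 4 / p := by
  rw [le_div_iff₀' (by positivity)]
  refine le_trans ?_ (natCast_mul_etilde2_add_sq_e1_sub_le hp κ)
  gcongr
  exact le_add_of_nonneg_left (etilde2_nonneg hp κ)

end Concentration

section Limits

variable {ι : Type*} {l : Filter ι} {p : ι → ℕ} {κ : ι → ℝ} {ξ : ℝ}

lemma eventually_two_le (hp : Tendsto (fun i => (p i : ℝ)) l atTop) : ∀ᶠ i in l, 2 ≤ p i :=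
  (hp.eventually_ge_atTop 2).mono fun _ hi => by exact_mod_cast hi

lemma tendsto_div_sub_one (hp : Tendsto (fun i => (p i : ℝ)) l atTop)
    (hκp : Tendsto (fun i => κ i / p i) l (𝓝 ξ)) :
    Tendsto (fun i => κ i / (p i - 1)) l (𝓝 ξ) := by
  have ratio : Tendsto (fun i => κ i / p i / (1 - (p i : ℝ)⁻¹)) l (𝓝 (ξ / (1 - 0))) :=
    hκp.div (hp.inv_tendsto_atTop.const_sub 1) (by norm_num)
  rw [sub_zero, div_one] at ratio
  refine ratio.congr' ?_
  filter_upwards [hp.eventually_gt_atTop 0] with i hi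
  rw [div_div, mul_sub, mul_one, mul_inv_cancel₀ hi.ne']

lemma tendsto_e1 (hp : Tendsto (fun i => (p i : ℝ)) l atTop)
    (hκp : Tendsto (fun i => κ i / p i) l (𝓝 ξ)) :
    Tendsto (fun i => e1 (p i) (κ i)) l (𝓝 (ξ / cXi ξ)) := by
  have hratio := tendsto_div_sub_one hp hκp
  have hcenter : Tendsto (fun i => κ i / (p i - 1) / cXi (κ i / (p i - 1))) l (𝓝 (ξ / cXi ξ)) :=
    hratio.div ((continuous_cXi.tendsto ξ).comp hratio) (cXi_pos ξ).ne'
  have hdist : Tendsto (fun i => e1 (p i) (κ i) - κ i / (p i - 1) / cXi (κ i / (p i - 1))) l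
      (𝓝 0) := by
    have hsq := squeeze_zero' (.of_forall fun i => sq_nonneg _)
      ((eventually_two_le hp).mono fun i hi => sq_e1_sub_le_four_div hi (κ i))
      (hp.const_div_atTop 4)
    rw [tendsto_zero_iff_abs_tendsto_zero]
    simpa [Real.sqrt_sq_eq_abs, Function.comp_def] using hsq.sqrt
  simpa using hdist.add hcenter

lemma tendsto_etilde2 (hp : Tendsto (fun i => (p i : ℝ)) l atTop) :
    Tendsto (fun i => etilde2 (p i) (κ i)) l (𝓝 0) := by
  refine squeeze_zero_norm' ((eventually_two_le hp).mono fun i hi => ?_) (hp.const_div_atTop 4)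
  have hpos : (0 : ℝ) < p i := by positivity
  simpa [le_div_iff₀' hpos, abs_mul] using abs_natCast_mul_etilde2_le hi (κ i)

lemma tendsto_f2 (hp : Tendsto (fun i => (p i : ℝ)) l atTop)
    (hκp : Tendsto (fun i => κ i / p i) l (𝓝 ξ)) :
    Tendsto (fun i => f2 (p i) (κ i)) l (𝓝 (1 / cXi ξ)) := by
  have h := ((tendsto_etilde2 (κ := κ) hp).add ((tendsto_e1 hp hκp).pow 2)).const_sub 1
  rw [zero_add, one_sub_sq_div_cXi] at h
  simpa only [f2, etilde2, sub_add_cancel] using h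

theorem moments_regime_kappa_over_p_to_xi_general (hp2 : ∀ i, 2 ≤ p i)
    (hp : Tendsto (fun i => (p i : ℝ)) l atTop) (hκp : Tendsto (fun i => κ i / p i) l (𝓝 ξ)) :
    Tendsto (fun i => e1 (p i) (κ i)) l (𝓝 (ξ / cXi ξ)) ∧
      (∀ i, |p i * etilde2 (p i) (κ i)| ≤ 4) ∧
      Tendsto (fun i => f2 (p i) (κ i)) l (𝓝 (1 / cXi ξ)) :=
  ⟨tendsto_e1 hp hκp, fun i => abs_natCast_mul_etilde2_le (hp2 i) (κ i), tendsto_f2 hp hκp⟩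

end Limits

theorem moments_regime_kappa_over_p_to_xi (p : ℕ → ℕ) (hp2 : ∀ n, 2 ≤ p n)
    (hp : Tendsto (fun n => (p n : ℝ)) atTop atTop)
    (κ : ℕ → ℝ) (hκ : ∀ n, 0 < κ n) (ξ : ℝ) (hξ : 0 < ξ)
    (hκp : Tendsto (fun n => κ n / (p n : ℝ)) atTop (nhds ξ)) :
    Tendsto (fun n => e1 (p n) (κ n)) atTop
        (nhds (ξ / (1 / 2 + Real.sqrt (1 / 4 + ξ ^ 2)))) ∧
      (∃ C : ℝ, ∀ n, |(p n : ℝ) * etilde2 (p n) (κ n)| ≤ C) ∧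
      Tendsto (fun n => f2 (p n) (κ n)) atTop
        (nhds (1 / (1 / 2 + Real.sqrt (1 / 4 + ξ ^ 2)))) :=
  have h := moments_regime_kappa_over_p_to_xi_general hp2 hp hκp
  ⟨h.1, ⟨4, h.2.1⟩, h.2.2⟩
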